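/- Fix x₀ > 0 and L > 3x₀ and let H, θ, λ be the associated critical data, and let ν ∈ ℝ. (i) If μ ∈ ℝ with μ ≠ 1, then u(s) = (ν/((2−λ)(1−μ)))·H(s)⁻¹ satisfies (d²/ds²)(2H(s)⁻³·ü(s)) + μ·(d/ds)(2H(s)⁻¹·u̇(s)) + (2−λ)H(s)u(s) = ν on (0,2L). (ii) If μ = 1, then u(s) = (ν/(2λ))·θ(s)·(s−L) satisfies the same equation with μ = 1. -/

import Mathlib

open Real Set

noncomputable def sig (x0 L : ℝ) : ℝ := π * Real.sqrt (x0 / (L + x0))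

noncomputable def kap (x0 L : ℝ) : ℝ := L / Real.sin (sig x0 L)

noncomputable def Hc (x0 L s : ℝ) : ℝ :=
  π / (sig x0 L * Real.sqrt (kap x0 L ^ 2 - (s - L) ^ 2))

/-- the angle function `θ(s) = (π/σ)(arcsin((s−L)/κ) + σ)` -/
noncomputable def th (x0 L s : ℝ) : ℝ :=
  π / sig x0 L * (Real.arcsin ((s - L) / kap x0 L) + sig x0 L)

/-- the fourth order operator `Lu = (2H⁻³ü)'' + μ(2H⁻¹u̇)' + (2−λ)Hu`,
with `λ = 2L/(L+x₀)` -/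
noncomputable def Lop (x0 L μ : ℝ) (u : ℝ → ℝ) (s : ℝ) : ℝ :=
  deriv (deriv fun t => 2 / Hc x0 L t ^ 3 * deriv (deriv u) t) s +
    μ * deriv (fun t => 2 / Hc x0 L t * deriv u t) s +
    (2 - 2 * L / (L + x0)) * Hc x0 L s * u s

/-!
Write `h = H⁻¹`, `p = h²`, `m = 2 - λ` and `x = s - L`. The critical data satisfy `p' = -m x`, that
is `H' = (m/2) x H³`, and `θ' = H`.

* For `u = h` one has `(2h³u'')' = p p''' = 0` and `(2hu')' = p'' = -m`, so the operator returns
  `m (1 - μ)`.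
* For `u = θ x` one has `2h³u'' = 4p - x p'`, whose second derivative is `2p'' = -2m`, and
  `(2hu')' = 4 + 2h'θ`, whose last term cancels `m H u = -2h'θ`. So the operator with `μ = 1`
  returns `4 - 2m = 2λ`.
-/

/-- The operator `u ↦ (2H⁻³ü)'' + μ(2H⁻¹u̇)' + mHu` for an arbitrary function `H` and constant `m`;
`Lop` is the case of the critical `H` and `m = 2 - λ`. -/
noncomputable def stabilityOp (H : ℝ → ℝ) (m μ : ℝ) (u : ℝ → ℝ) (s : ℝ) : ℝ :=
  deriv (deriv fun t => 2 / H t ^ 3 * deriv (deriv u) t) s +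
    μ * deriv (fun t => 2 / H t * deriv u t) s + m * H s * u s

lemma Lop_eq_stabilityOp (x0 L μ : ℝ) :
    Lop x0 L μ = stabilityOp (Hc x0 L) (2 - 2 * L / (L + x0)) μ := rfl

lemma stabilityOp_const_mul (H : ℝ → ℝ) (m μ k : ℝ) (u : ℝ → ℝ) (s : ℝ) :
    stabilityOp H m μ (fun r => k * u r) s = k * stabilityOp H m μ u s := by
  simp only [stabilityOp, deriv_const_mul_field', mul_left_comm _ k]
  ring

lemma eqOn_deriv_of_eqOn_of_hasDerivAt {U : Set ℝ} {f g g' : ℝ → ℝ} (hU : IsOpen U)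
    (hfg : EqOn f g U) (hg : ∀ t ∈ U, HasDerivAt g (g' t) t) : EqOn (deriv f) g' U :=
  fun t ht => (hfg.deriv hU ht).trans (hg t ht).deriv

lemma eqOn_deriv_mul_sub_const {H θ : ℝ → ℝ} {U : Set ℝ} {c : ℝ}
    (hθ : ∀ t ∈ U, HasDerivAt θ (H t) t) :
    EqOn (deriv fun r => θ r * (r - c)) (fun t => θ t + (t - c) * H t) U := fun t ht => by
  rw [((hθ t ht).fun_mul ((hasDerivAt_id' t).sub_const c)).deriv]
  ring

/-- `H` has no zero on `U` and satisfies `H' = (m/2)(t - c)H³` there, which is the relation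
`(H⁻²)' = -m(t - c)` of the critical data with the powers of `H` cleared. -/
structure SolvesCubicODEOn (H : ℝ → ℝ) (m c : ℝ) (U : Set ℝ) : Prop where
  ne_zero : ∀ t ∈ U, H t ≠ 0
  hasDerivAt : ∀ t ∈ U, HasDerivAt H (m / 2 * (t - c) * H t ^ 3) t

namespace SolvesCubicODEOn

variable {H θ : ℝ → ℝ} {U : Set ℝ} {m c s : ℝ}

lemma hasDerivAt_inv (hH : SolvesCubicODEOn H m c U) (hs : s ∈ U) :
    HasDerivAt (fun t => (H t)⁻¹) (-(m / 2) * ((s - c) * H s)) s := by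
  have hHs := hH.ne_zero s hs
  refine ((hH.hasDerivAt s hs).fun_inv hHs).congr_deriv ?_
  field_simp

lemma hasDerivAt_inv_sq (hH : SolvesCubicODEOn H m c U) (hs : s ∈ U) :
    HasDerivAt (fun t => (H t)⁻¹ ^ 2) (-m * (s - c)) s := by
  have hHs := hH.ne_zero s hs
  refine ((hH.hasDerivAt_inv hs).fun_pow 2).congr_deriv ?_
  simp only [Nat.cast_ofNat, Nat.add_one_sub_one, pow_one]
  field_simp

lemma hasDerivAt_sub_mul (hH : SolvesCubicODEOn H m c U) (hs : s ∈ U) :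
    HasDerivAt (fun t => (t - c) * H t) (H s + m / 2 * (s - c) ^ 2 * H s ^ 3) s := by
  refine (((hasDerivAt_id' s).sub_const c).fun_mul (hH.hasDerivAt s hs)).congr_deriv ?_
  ring

lemma eqOn_deriv_inv (hH : SolvesCubicODEOn H m c U) :
    EqOn (deriv fun r => (H r)⁻¹) (fun t => -(m / 2) * ((t - c) * H t)) U :=
  fun _ ht => (hH.hasDerivAt_inv ht).deriv

lemma deriv_two_div_mul_deriv_inv (hU : IsOpen U) (hH : SolvesCubicODEOn H m c U) (hs : s ∈ U) :
    deriv (fun t => 2 / H t * deriv (fun r => (H r)⁻¹) t) s = -m := by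
  have flux : EqOn (fun t => 2 / H t * deriv (fun r => (H r)⁻¹) t) (fun t => -m * (t - c)) U :=
    fun t ht => by
      have hHt := hH.ne_zero t ht
      simp only [hH.eqOn_deriv_inv ht]
      field_simp
  rw [flux.deriv hU hs, (((hasDerivAt_id' s).sub_const c).const_mul (-m)).deriv, mul_one]

lemma eqOn_deriv_two_div_cube_mul_deriv_deriv_inv (hU : IsOpen U)
    (hH : SolvesCubicODEOn H m c U) :
    EqOn (deriv fun t => 2 / H t ^ 3 * deriv (deriv fun r => (H r)⁻¹) t) 0 U := by
  have second_deriv : EqOn (deriv (deriv fun r => (H r)⁻¹))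
      (fun t => -(m / 2) * (H t + m / 2 * (t - c) ^ 2 * H t ^ 3)) U :=
    eqOn_deriv_of_eqOn_of_hasDerivAt hU hH.eqOn_deriv_inv
      fun _ ht => (hH.hasDerivAt_sub_mul ht).const_mul _
  have flux : EqOn (fun t => 2 / H t ^ 3 * deriv (deriv fun r => (H r)⁻¹) t)
      (fun t => -m * ((H t)⁻¹ ^ 2 + m / 2 * (t - c) ^ 2)) U := fun t ht => by
    have hHt := hH.ne_zero t ht
    simp only [second_deriv ht]
    field_simp
  refine eqOn_deriv_of_eqOn_of_hasDerivAt hU flux fun t ht => ?_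
  have hsq := (((hasDerivAt_id' t).sub_const c).fun_pow 2).const_mul (m / 2)
  refine (((hH.hasDerivAt_inv_sq ht).fun_add hsq).const_mul (-m)).congr_deriv ?_
  simp only [Pi.zero_apply]
  ring

theorem stabilityOp_inv (hU : IsOpen U) (hH : SolvesCubicODEOn H m c U) (μ : ℝ) (hs : s ∈ U) :
    stabilityOp H m μ (fun r => (H r)⁻¹) s = m * (1 - μ) := by
  rw [stabilityOp, (hH.eqOn_deriv_two_div_cube_mul_deriv_deriv_inv hU).deriv hU hs, deriv_zero,
    hH.deriv_two_div_mul_deriv_inv hU hs, mul_inv_cancel_right₀ (hH.ne_zero s hs), Pi.zero_apply]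
  ring

lemma deriv_two_div_mul_deriv_mul_sub (hU : IsOpen U) (hH : SolvesCubicODEOn H m c U)
    (hθ : ∀ t ∈ U, HasDerivAt θ (H t) t) (hs : s ∈ U) :
    deriv (fun t => 2 / H t * deriv (fun r => θ r * (r - c)) t) s =
      4 - m * H s * (θ s * (s - c)) := by
  have flux : EqOn (fun t => 2 / H t * deriv (fun r => θ r * (r - c)) t)
      (fun t => 2 * ((H t)⁻¹ * θ t + (t - c))) U := fun t ht => by
    have hHt := hH.ne_zero t ht
    simp only [eqOn_deriv_mul_sub_const hθ ht]
    field_simp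
  have flux_deriv := (((hH.hasDerivAt_inv hs).fun_mul (hθ s hs)).fun_add
    ((hasDerivAt_id' s).sub_const c)).const_mul 2
  rw [flux.deriv hU hs, flux_deriv.deriv, inv_mul_cancel₀ (hH.ne_zero s hs)]
  ring

lemma eqOn_deriv_two_div_cube_mul_deriv_deriv_mul_sub (hU : IsOpen U)
    (hH : SolvesCubicODEOn H m c U) (hθ : ∀ t ∈ U, HasDerivAt θ (H t) t) :
    EqOn (deriv fun t => 2 / H t ^ 3 * deriv (deriv fun r => θ r * (r - c)) t)
      (fun t => -2 * m * (t - c)) U := by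
  have second_deriv : EqOn (deriv (deriv fun r => θ r * (r - c)))
      (fun t => H t + (H t + m / 2 * (t - c) ^ 2 * H t ^ 3)) U :=
    eqOn_deriv_of_eqOn_of_hasDerivAt hU (eqOn_deriv_mul_sub_const hθ)
      fun t ht => (hθ t ht).fun_add (hH.hasDerivAt_sub_mul ht)
  have flux : EqOn (fun t => 2 / H t ^ 3 * deriv (deriv fun r => θ r * (r - c)) t)
      (fun t => 4 * (H t)⁻¹ ^ 2 + m * (t - c) ^ 2) U := fun t ht => by
    have hHt := hH.ne_zero t ht
    simp only [second_deriv ht]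
    field_simp
    ring
  refine eqOn_deriv_of_eqOn_of_hasDerivAt hU flux fun t ht => ?_
  have hsq := (((hasDerivAt_id' t).sub_const c).fun_pow 2).const_mul m
  refine (((hH.hasDerivAt_inv_sq ht).const_mul 4).fun_add hsq).congr_deriv ?_
  ring

theorem stabilityOp_one_mul_sub (hU : IsOpen U) (hH : SolvesCubicODEOn H m c U)
    (hθ : ∀ t ∈ U, HasDerivAt θ (H t) t) (hs : s ∈ U) :
    stabilityOp H m 1 (fun r => θ r * (r - c)) s = 2 * (2 - m) := by
  have leading_term := (hH.eqOn_deriv_two_div_cube_mul_deriv_deriv_mul_sub hU hθ).deriv hU hs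
  have linear_deriv := ((hasDerivAt_id' s).sub_const c).const_mul (-2 * m)
  rw [stabilityOp, leading_term, linear_deriv.deriv, hH.deriv_two_div_mul_deriv_mul_sub hU hθ hs]
  ring

end SolvesCubicODEOn

section Semicircle

variable {c κ s : ℝ}

lemma sq_sub_sq_sub_pos (hs : s ∈ Ioo (c - κ) (c + κ)) : 0 < κ ^ 2 - (s - c) ^ 2 :=
  sub_pos.2 (sq_lt_sq' (by linarith [hs.1]) (by linarith [hs.2]))

lemma hasDerivAt_inv_sqrt_sq_sub_sq_sub (hs : s ∈ Ioo (c - κ) (c + κ)) :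
    HasDerivAt (fun t => (√(κ ^ 2 - (t - c) ^ 2))⁻¹)
      ((s - c) * (√(κ ^ 2 - (s - c) ^ 2))⁻¹ ^ 3) s := by
  have hpos := sq_sub_sq_sub_pos hs
  have hsqrt := Real.sqrt_pos.2 hpos
  have hpoly : HasDerivAt (fun t => κ ^ 2 - (t - c) ^ 2) (-(2 * (s - c))) s := by
    refine ((((hasDerivAt_id' s).sub_const c).fun_pow 2).const_sub (κ ^ 2)).congr_deriv ?_
    ring
  refine ((hpoly.sqrt hpos.ne').fun_inv hsqrt.ne').congr_deriv ?_
  field_simp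

lemma hasDerivAt_arcsin_sub_div (hs : s ∈ Ioo (c - κ) (c + κ)) :
    HasDerivAt (fun t => arcsin ((t - c) / κ)) (√(κ ^ 2 - (s - c) ^ 2))⁻¹ s := by
  have hκ : 0 < κ := by linarith [hs.1, hs.2]
  have hgt : -1 < (s - c) / κ := by rw [lt_div_iff₀ hκ]; linarith [hs.1]
  have hlt : (s - c) / κ < 1 := by rw [div_lt_one hκ]; linarith [hs.2]
  have hsqrt : √(1 - ((s - c) / κ) ^ 2) = √(κ ^ 2 - (s - c) ^ 2) / κ := by
    rw [div_pow, one_sub_div (pow_ne_zero 2 hκ.ne'), Real.sqrt_div' _ (sq_nonneg κ),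
      Real.sqrt_sq hκ.le]
  refine ((hasDerivAt_arcsin hgt.ne' hlt.ne).comp s
    (((hasDerivAt_id' s).sub_const c).div_const κ)).congr_deriv ?_
  rw [hsqrt]
  field_simp

end Semicircle

section CriticalData

variable {x0 L s : ℝ}

lemma sig_pos (hx0 : 0 < x0) (hL : 0 < L) : 0 < sig x0 L := by
  unfold sig
  positivity

lemma sig_lt_pi (hx0 : 0 < x0) (hL : 0 < L) : sig x0 L < π := by
  refine mul_lt_of_lt_one_right pi_pos ?_
  rw [Real.sqrt_lt' one_pos, one_pow, div_lt_one (by positivity)]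
  linarith

lemma sig_div_pi_sq (hx0 : 0 < x0) (hL : 0 < L) :
    (sig x0 L / π) ^ 2 = (2 - 2 * L / (L + x0)) / 2 := by
  rw [sig, mul_div_cancel_left₀ _ pi_ne_zero, Real.sq_sqrt (by positivity)]
  field_simp
  ring

lemma le_kap (hx0 : 0 < x0) (hL : 0 < L) : L ≤ kap x0 L :=
  le_div_self hL.le (sin_pos_of_pos_of_lt_pi (sig_pos hx0 hL) (sig_lt_pi hx0 hL)) (sin_le_one _)

lemma Ioo_zero_two_mul_subset (hx0 : 0 < x0) (hL : 0 < L) :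
    Ioo 0 (2 * L) ⊆ Ioo (L - kap x0 L) (L + kap x0 L) := by
  have hκ := le_kap hx0 hL
  exact Ioo_subset_Ioo (by linarith) (by linarith)

lemma Hc_eq (x0 L s : ℝ) :
    Hc x0 L s = π / sig x0 L * (√(kap x0 L ^ 2 - (s - L) ^ 2))⁻¹ := by
  rw [Hc, ← div_div, div_eq_mul_inv _ √_]

lemma Hc_ne_zero (hσ : sig x0 L ≠ 0) (hs : s ∈ Ioo (L - kap x0 L) (L + kap x0 L)) :
    Hc x0 L s ≠ 0 :=
  div_ne_zero pi_ne_zero (mul_ne_zero hσ (Real.sqrt_pos.2 (sq_sub_sq_sub_pos hs)).ne')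

lemma hasDerivAt_Hc (hσ : sig x0 L ≠ 0) (hs : s ∈ Ioo (L - kap x0 L) (L + kap x0 L)) :
    HasDerivAt (Hc x0 L) ((sig x0 L / π) ^ 2 * (s - L) * Hc x0 L s ^ 3) s := by
  rw [funext (Hc_eq x0 L)]
  refine ((hasDerivAt_inv_sqrt_sq_sub_sq_sub hs).const_mul _).congr_deriv ?_
  field_simp

lemma hasDerivAt_th (hs : s ∈ Ioo (L - kap x0 L) (L + kap x0 L)) :
    HasDerivAt (th x0 L) (Hc x0 L s) s := by
  rw [Hc_eq]
  exact ((hasDerivAt_arcsin_sub_div hs).add_const _).const_mul _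

lemma solvesCubicODEOn_Hc (hx0 : 0 < x0) (hL : 0 < L) :
    SolvesCubicODEOn (Hc x0 L) (2 - 2 * L / (L + x0)) L (Ioo (L - kap x0 L) (L + kap x0 L)) where
  ne_zero _ := Hc_ne_zero (sig_pos hx0 hL).ne'
  hasDerivAt _ ht := sig_div_pi_sq hx0 hL ▸ hasDerivAt_Hc (sig_pos hx0 hL).ne' ht

end CriticalData

theorem statement16_general (x0 L ν : ℝ) (hx0 : 0 < x0) (hL : 0 < L) :
    (∀ μ : ℝ, μ ≠ 1 → ∀ s ∈ Ioo (L - kap x0 L) (L + kap x0 L),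
        Lop x0 L μ
          (fun r => ν / ((2 - 2 * L / (L + x0)) * (1 - μ)) * (Hc x0 L r)⁻¹) s = ν) ∧
    ∀ s ∈ Ioo (L - kap x0 L) (L + kap x0 L),
      Lop x0 L 1
        (fun r => ν / (2 * (2 * L / (L + x0))) * (th x0 L r * (r - L))) s = ν := by
  have hm : 2 - 2 * L / (L + x0) ≠ 0 := by
    rw [show 2 - 2 * L / (L + x0) = 2 * x0 / (L + x0) by field_simp; ring]
    positivity
  have hH := solvesCubicODEOn_Hc hx0 hL
  refine ⟨fun μ hμ s hs => ?_, fun s hs => ?_⟩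
  · rw [Lop_eq_stabilityOp, stabilityOp_const_mul, hH.stabilityOp_inv isOpen_Ioo μ hs]
    exact div_mul_cancel₀ ν (mul_ne_zero hm (sub_ne_zero.2 hμ.symm))
  · rw [Lop_eq_stabilityOp, stabilityOp_const_mul,
      hH.stabilityOp_one_mul_sub isOpen_Ioo (fun _ => hasDerivAt_th) hs, sub_sub_cancel]
    exact div_mul_cancel₀ ν (by positivity)

/-- particular solutions of the inhomogeneous stability equation `Lu = ν`:
(i) for `μ ≠ 1`, `u = (ν/((2−λ)(1−μ)))H⁻¹`; (ii) for `μ = 1`, `u = (ν/(2λ))θ(s)(s−L)`,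
where `λ = 2L/(L+x₀)`. -/
theorem statement16 (x0 L ν : ℝ) (hx0 : 0 < x0) (hL : 3 * x0 < L) :
    (∀ μ : ℝ, μ ≠ 1 → ∀ s ∈ Set.Ioo (0:ℝ) (2 * L),
        Lop x0 L μ
          (fun r => ν / ((2 - 2 * L / (L + x0)) * (1 - μ)) * (Hc x0 L r)⁻¹) s = ν) ∧
    ∀ s ∈ Set.Ioo (0:ℝ) (2 * L),
      Lop x0 L 1
        (fun r => ν / (2 * (2 * L / (L + x0))) * (th x0 L r * (r - L))) s = ν := by
  have hsub := Ioo_zero_two_mul_subset hx0 (show 0 < L by linarith)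
  exact (statement16_general x0 L ν hx0 (by linarith)).imp
    (fun h μ hμ s hs => h μ hμ s (hsub hs)) (fun h s hs => h s (hsub hs))
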